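/- arXiv:2101.10251 — 2 statements merged into one kernel-verified Lean document; each statement's English description precedes it below -/
import Mathlib

section
/- Suppose ∇_iα_j = 0 at every point of Ω (equivalently β = β'). Then at every point of Ω one has Σ_{i,j} g^{ij}β_{ij} = Σ_{i,j} g^{ij}α_iα_j, and this function is constant on Ω. Consequently, if in addition X = (X^k) is a vector field on Ω with lowered components X_j = Σ_k g_{jk}X^k satisfying the Hesse soliton equation β_{ij} − (1/2)(∇_iX_j + ∇_jX_i) = λ g_{ij} on Ω for some λ ∈ ℝ, then the divergence div X = Σ_{i,j} g^{ij}∇_iX_j is constant on Ω. -/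
/-!
The function `f = Σ g^{ij} α_i α_j` has vanishing partial derivatives. Differentiating
`g * g⁻¹ = 1` gives `∂_k g⁻¹ = -g⁻¹ (∂_k g) g⁻¹` (`pd_gi`). Since `γ` is totally symmetric, the
Christoffel symbols satisfy `Γ^r_{ki} = (1/2) Σ_p g^{rp} ∂_k g_{pi}`, so the hypothesis `∇α = 0`
reads `∂_k α = (1/2) α g⁻¹ ∂_k g` as row vectors (`bet_eq`). By symmetry of `g⁻¹` the two terms
`(∂_k α) g⁻¹ α` of `∂_k f` are equal and together cancel `α (∂_k g⁻¹) α` (`pd_normAlphaSq`). Hence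
`f` is constant on the connected open set `Ω`.

Contracting `β_{ij} = Σ_r Γ^r_{ij} α_r` with `g^{ij}` and using `Σ g^{ij} γ_{pij} = α_p` identifies
`f` with the trace of `β`. Finally, the trace of the soliton equation is
`tr β - div X = λ n`, so `div X` is constant as well.
-/

noncomputable section

/-- Partial derivative in the `i`-th coordinate direction. -/
def pd {n : ℕ} (i : Fin n) (f : (Fin n → ℝ) → ℝ) : (Fin n → ℝ) → ℝ :=
  fun x => fderiv ℝ f x (Pi.single i 1)

variable {n : ℕ}

/-- The Hessian metric `g_{ij} = ∂_i ∂_j φ`. -/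
def gmet (φ : (Fin n → ℝ) → ℝ) (x : Fin n → ℝ) : Matrix (Fin n) (Fin n) ℝ :=
  fun i j => pd i (pd j φ) x

/-- The inverse metric `g^{ij}`. -/
def gi (φ : (Fin n → ℝ) → ℝ) (x : Fin n → ℝ) : Matrix (Fin n) (Fin n) ℝ :=
  (gmet φ x)⁻¹

/-- The lowered difference tensor `γ_{ijk} = (1/2) ∂_i∂_j∂_k φ`. -/
def gam (φ : (Fin n → ℝ) → ℝ) (i j k : Fin n) : (Fin n → ℝ) → ℝ :=
  fun x => (1 / 2) * pd i (pd j (pd k φ)) x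

/-- The Christoffel symbols `Γ^i_{jk} = Σ_p g^{ip} γ_{pjk}`. -/
def Chr (φ : (Fin n → ℝ) → ℝ) (i j k : Fin n) : (Fin n → ℝ) → ℝ :=
  fun x => ∑ p, gi φ x i p * gam φ p j k x

/-- The first Koszul form `α_i = Σ_{r,p} g^{rp} γ_{pri}`. -/
def alph (φ : (Fin n → ℝ) → ℝ) (i : Fin n) : (Fin n → ℝ) → ℝ :=
  fun x => ∑ r, ∑ p, gi φ x r p * gam φ p r i x

/-- The second Koszul form `β_{ij} = ∂_i α_j`. -/
def bet (φ : (Fin n → ℝ) → ℝ) (i j : Fin n) : (Fin n → ℝ) → ℝ :=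
  pd i (alph φ j)

/-- Covariant derivative of the first Koszul form `∇_i α_j`. -/
def covAlpha (φ : (Fin n → ℝ) → ℝ) (i j : Fin n) : (Fin n → ℝ) → ℝ :=
  fun x => bet φ i j x - ∑ r, Chr φ r i j x * alph φ r x

/-- Covariant derivative of a covector field `∇_i X_j`. -/
def covCo (φ : (Fin n → ℝ) → ℝ) (X : Fin n → (Fin n → ℝ) → ℝ) (i j : Fin n) :
    (Fin n → ℝ) → ℝ :=
  fun x => pd i (X j) x - ∑ r, Chr φ r i j x * X r x

/-- The Hessian `∇_i∇_j f` of a function. -/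
def covHess (φ f : (Fin n → ℝ) → ℝ) (i j : Fin n) : (Fin n → ℝ) → ℝ :=
  fun x => pd i (pd j f) x - ∑ r, Chr φ r i j x * pd r f x

/-- Covariant derivative of the difference tensor `∇_i γ_{jkl}`. -/
def covGam (φ : (Fin n → ℝ) → ℝ) (i j k l : Fin n) : (Fin n → ℝ) → ℝ :=
  fun x => pd i (gam φ j k l) x -
    ∑ r, (Chr φ r i j x * gam φ r k l x + Chr φ r i k x * gam φ j r l x +
      Chr φ r i l x * gam φ j k r x)

/-- Second covariant derivative of the first Koszul form `∇_i∇_j α_k`. -/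
def cov2Alpha (φ : (Fin n → ℝ) → ℝ) (i j k : Fin n) : (Fin n → ℝ) → ℝ :=
  fun x => pd i (covAlpha φ j k) x -
    ∑ r, (Chr φ r i j x * covAlpha φ r k x + Chr φ r i k x * covAlpha φ j r x)

/-- The curvature tensor `R^i_{jkl}`. -/
def Riem (φ : (Fin n → ℝ) → ℝ) (i j k l : Fin n) : (Fin n → ℝ) → ℝ :=
  fun x => pd k (Chr φ i l j) x - pd l (Chr φ i k j) x +
    ∑ r, (Chr φ i k r x * Chr φ r l j x - Chr φ i l r x * Chr φ r k j x)

/-- The Ricci tensor `R_{jk} = Σ_s R^s_{jsk}`. -/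
def Ricci (φ : (Fin n → ℝ) → ℝ) (j k : Fin n) : (Fin n → ℝ) → ℝ :=
  fun x => ∑ s, Riem φ s j s k x

/-- The scalar curvature `R = Σ g^{jk} R_{jk}`. -/
def Scal (φ : (Fin n → ℝ) → ℝ) : (Fin n → ℝ) → ℝ :=
  fun x => ∑ j, ∑ k, gi φ x j k * Ricci φ j k x

/-- The Laplace–Beltrami operator of `g`. -/
def lap (φ u : (Fin n → ℝ) → ℝ) : (Fin n → ℝ) → ℝ :=
  fun x => ∑ i, ∑ j, gi φ x i j * (pd i (pd j u) x - ∑ k, Chr φ k i j x * pd k u x)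

/-- `|α|²`. -/
def normAlphaSq (φ : (Fin n → ℝ) → ℝ) : (Fin n → ℝ) → ℝ :=
  fun x => ∑ i, ∑ j, gi φ x i j * alph φ i x * alph φ j x

/-- `|γ|²`. -/
def normGamSq (φ : (Fin n → ℝ) → ℝ) : (Fin n → ℝ) → ℝ :=
  fun x => ∑ i, ∑ i', ∑ j, ∑ j', ∑ k, ∑ k',
    gi φ x i i' * gi φ x j j' * gi φ x k k' * gam φ i j k x * gam φ i' j' k' x

/-- `|∇γ|²`. -/
def normCovGamSq (φ : (Fin n → ℝ) → ℝ) : (Fin n → ℝ) → ℝ :=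
  fun x => ∑ i, ∑ i', ∑ j, ∑ j', ∑ k, ∑ k', ∑ l, ∑ l',
    gi φ x i i' * gi φ x j j' * gi φ x k k' * gi φ x l l' *
      covGam φ i j k l x * covGam φ i' j' k' l' x

/-- `|Rm|²` (the upper index is lowered with `g`). -/
def normRmSq (φ : (Fin n → ℝ) → ℝ) : (Fin n → ℝ) → ℝ :=
  fun x => ∑ i, ∑ i', ∑ j, ∑ j', ∑ k, ∑ k', ∑ l, ∑ l',
    gmet φ x i i' * gi φ x j j' * gi φ x k k' * gi φ x l l' *
      Riem φ i j k l x * Riem φ i' j' k' l' x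

/-- `|Ric|²`. -/
def normRicSq (φ : (Fin n → ℝ) → ℝ) : (Fin n → ℝ) → ℝ :=
  fun x => ∑ j, ∑ j', ∑ k, ∑ k',
    gi φ x j j' * gi φ x k k' * Ricci φ j k x * Ricci φ j' k' x

/-- The full contraction `Σ R_{ij} β_{ij}`. -/
def ricBeta (φ : (Fin n → ℝ) → ℝ) : (Fin n → ℝ) → ℝ :=
  fun x => ∑ i, ∑ i', ∑ j, ∑ j',
    gi φ x i i' * gi φ x j j' * Ricci φ i j x * bet φ i' j' x

/-- The full contraction `Σ R_{ij} ∇_i α_j`. -/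
def ricCovAlpha (φ : (Fin n → ℝ) → ℝ) : (Fin n → ℝ) → ℝ :=
  fun x => ∑ i, ∑ i', ∑ j, ∑ j',
    gi φ x i i' * gi φ x j j' * Ricci φ i j x * covAlpha φ i' j' x

/-- The full contraction `Σ (∇_i∇_j α_k) γ_{ijk}`. -/
def cov2AlphaGam (φ : (Fin n → ℝ) → ℝ) : (Fin n → ℝ) → ℝ :=
  fun x => ∑ i, ∑ i', ∑ j, ∑ j', ∑ k, ∑ k',
    gi φ x i i' * gi φ x j j' * gi φ x k k' * cov2Alpha φ i j k x * gam φ i' j' k' x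

/-- The lowered components `X_j = Σ_k g_{jk} X^k` of a vector field `X`. -/
def lowered {n : ℕ} (φ : (Fin n → ℝ) → ℝ) (X : Fin n → (Fin n → ℝ) → ℝ) (j : Fin n) :
    (Fin n → ℝ) → ℝ :=
  fun x => ∑ k, gmet φ x j k * X k x

variable {n : ℕ}

/-! ### Partial derivatives -/

lemma contDiff_pd {n : ℕ} (i : Fin n) {f : (Fin n → ℝ) → ℝ} (hf : ContDiff ℝ (⊤ : ℕ∞) f) :
    ContDiff ℝ (⊤ : ℕ∞) (pd i f) := by
  have h : ContDiff ℝ (⊤ : ℕ∞) (fderiv ℝ f) := hf.fderiv_right (by simp)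
  exact h.clm_apply contDiff_const

lemma ContDiff.differentiableAt_top {n : ℕ} {f : (Fin n → ℝ) → ℝ}
    (hf : ContDiff ℝ (⊤ : ℕ∞) f) (x : Fin n → ℝ) : DifferentiableAt ℝ f x :=
  hf.differentiable (by simp) x

lemma pd_comm {n : ℕ} (i j : Fin n) {f : (Fin n → ℝ) → ℝ} (hf : ContDiff ℝ (⊤ : ℕ∞) f) :
    pd i (pd j f) = pd j (pd i f) := by
  funext x
  have h : ContDiff ℝ (⊤ : ℕ∞) (fderiv ℝ f) := hf.fderiv_right (by simp)
  have hd : DifferentiableAt ℝ (fderiv ℝ f) x := h.differentiable (by simp) x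
  have key (a b : Fin n) : pd a (pd b f) x
      = fderiv ℝ (fderiv ℝ f) x (Pi.single a 1) (Pi.single b 1) := by
    unfold pd
    rw [fderiv_clm_apply hd (differentiableAt_const _)]
    simp
  rw [key, key]
  have hs : IsSymmSndFDerivAt ℝ f x :=
    hf.contDiffAt.isSymmSndFDerivAt (by
      simpa using (WithTop.coe_le_coe.2 le_top : ((2 : ℕ∞) : WithTop ℕ∞) ≤ ((⊤ : ℕ∞) : WithTop ℕ∞)))
  exact hs _ _

lemma pd_mul {n : ℕ} (k : Fin n) {f h : (Fin n → ℝ) → ℝ} {x : Fin n → ℝ}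
    (hf : DifferentiableAt ℝ f x) (hh : DifferentiableAt ℝ h x) :
    pd k (fun y => f y * h y) x = pd k f x * h x + f x * pd k h x := by
  unfold pd
  rw [fderiv_fun_mul hf hh]
  simp
  ring

lemma pd_sum {n : ℕ} {ι : Type*} [Fintype ι] (k : Fin n) {f : ι → (Fin n → ℝ) → ℝ}
    {x : Fin n → ℝ} (hf : ∀ i, DifferentiableAt ℝ (f i) x) :
    pd k (fun y => ∑ i, f i y) x = ∑ i, pd k (f i) x := by
  unfold pd
  rw [fderiv_fun_sum (fun i _ => hf i)]
  simp

/-! ### Symmetry and regularity of the tensors -/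

lemma gam_swap_left {n : ℕ} {φ : (Fin n → ℝ) → ℝ} (hφ : ContDiff ℝ (⊤ : ℕ∞) φ)
    (i j k : Fin n) : gam φ i j k = gam φ j i k := by
  unfold gam
  rw [pd_comm i j (contDiff_pd k hφ)]

lemma gam_swap_right {n : ℕ} {φ : (Fin n → ℝ) → ℝ} (hφ : ContDiff ℝ (⊤ : ℕ∞) φ)
    (i j k : Fin n) : gam φ i j k = gam φ i k j := by
  unfold gam
  rw [pd_comm j k hφ]

lemma differentiableAt_gmet {n : ℕ} {φ : (Fin n → ℝ) → ℝ} (hφ : ContDiff ℝ (⊤ : ℕ∞) φ)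
    (x : Fin n → ℝ) (i j : Fin n) : DifferentiableAt ℝ (fun y => gmet φ y i j) x :=
  (contDiff_pd i (contDiff_pd j hφ)).differentiableAt_top x

lemma differentiableAt_matrix_det {n : ℕ} {M : (Fin n → ℝ) → Matrix (Fin n) (Fin n) ℝ}
    {x : Fin n → ℝ} (hM : ∀ i j, DifferentiableAt ℝ (fun y => M y i j) x) :
    DifferentiableAt ℝ (fun y => (M y).det) x := by
  simp only [Matrix.det_apply']
  refine DifferentiableAt.fun_sum fun σ _ => DifferentiableAt.const_mul ?_ _
  have h : ∀ i, DifferentiableAt ℝ (fun y => M y (σ i) i) x := fun i => hM (σ i) i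
  fun_prop

/-- The entries of `g⁻¹` are differentiable, by Cramer's rule. -/
lemma differentiableAt_gi {n : ℕ} {φ : (Fin n → ℝ) → ℝ} (hφ : ContDiff ℝ (⊤ : ℕ∞) φ)
    {x : Fin n → ℝ} (hx : (gmet φ x).PosDef) (i j : Fin n) :
    DifferentiableAt ℝ (fun y => gi φ y i j) x := by
  simp only [gi, Matrix.inv_def, Ring.inverse_eq_inv', Matrix.smul_apply, smul_eq_mul,
    Matrix.adjugate_apply]
  refine DifferentiableAt.mul ?_ ?_
  · exact (differentiableAt_matrix_det (differentiableAt_gmet hφ x)).inv hx.det_pos.ne'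
  · refine differentiableAt_matrix_det fun a b => ?_
    by_cases h : a = j
    · simp [Matrix.updateRow_apply, h]
    · simpa [Matrix.updateRow_apply, h] using differentiableAt_gmet hφ x a b

lemma differentiableAt_alph {n : ℕ} {φ : (Fin n → ℝ) → ℝ} (hφ : ContDiff ℝ (⊤ : ℕ∞) φ)
    {x : Fin n → ℝ} (hx : (gmet φ x).PosDef) (i : Fin n) :
    DifferentiableAt ℝ (alph φ i) x := by
  unfold alph
  refine DifferentiableAt.fun_sum fun r _ => DifferentiableAt.fun_sum fun p _ => ?_
  refine (differentiableAt_gi hφ hx r p).mul ?_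
  exact ((contDiff_pd p (contDiff_pd r (contDiff_pd i hφ))).differentiableAt_top x).const_mul _

/-! ### Derivatives of the inverse metric and of `|α|²` -/

/-- The matrix `∂_k g` at the point `x`. -/
def dgmet {n : ℕ} (φ : (Fin n → ℝ) → ℝ) (k : Fin n) (x : Fin n → ℝ) :
    Matrix (Fin n) (Fin n) ℝ :=
  fun i j => pd k (fun y => gmet φ y i j) x

/-- The matrix `∂_k (g⁻¹)` at the point `x`. -/
def dgi {n : ℕ} (φ : (Fin n → ℝ) → ℝ) (k : Fin n) (x : Fin n → ℝ) :
    Matrix (Fin n) (Fin n) ℝ :=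
  fun i j => pd k (fun y => gi φ y i j) x

lemma pd_gi {n : ℕ} {φ : (Fin n → ℝ) → ℝ} (hφ : ContDiff ℝ (⊤ : ℕ∞) φ)
    {Ω : Set (Fin n → ℝ)} (hΩ : IsOpen Ω) (hpos : ∀ x ∈ Ω, (gmet φ x).PosDef)
    {x : Fin n → ℝ} (hx : x ∈ Ω) (k : Fin n) :
    dgi φ k x = -(gi φ x * dgmet φ k x * gi φ x) := by
  have hleibniz : dgmet φ k x * gi φ x + gmet φ x * dgi φ k x = 0 := by
    ext i j
    have hconst : pd k (fun y => ∑ l, gmet φ y i l * gi φ y l j) x = 0 := by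
      have heq : (fun y => ∑ l, gmet φ y i l * gi φ y l j)
          =ᶠ[nhds x] fun _ => (1 : Matrix (Fin n) (Fin n) ℝ) i j := by
        filter_upwards [hΩ.mem_nhds hx] with y hy
        rw [← Matrix.mul_apply, gi, Matrix.mul_nonsing_inv _ (hpos y hy).det_pos.ne'.isUnit]
      unfold pd
      rw [heq.fderiv_eq]
      simp
    rw [pd_sum k fun l => (differentiableAt_gmet hφ x i l).fun_mul
      (differentiableAt_gi hφ (hpos x hx) l j)] at hconst
    simp only [pd_mul k (differentiableAt_gmet hφ x _ _)
      (differentiableAt_gi hφ (hpos x hx) _ _), Finset.sum_add_distrib] at hconst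
    simpa [Matrix.mul_apply, dgmet, dgi] using hconst
  have hinv : gi φ x * gmet φ x = 1 :=
    Matrix.nonsing_inv_mul _ (hpos x hx).det_pos.ne'.isUnit
  calc dgi φ k x = gi φ x * (gmet φ x * dgi φ k x) := by
        rw [← Matrix.mul_assoc, hinv, Matrix.one_mul]
    _ = gi φ x * -(dgmet φ k x * gi φ x) := by rw [eq_neg_of_add_eq_zero_right hleibniz]
    _ = _ := by rw [Matrix.mul_neg, Matrix.mul_assoc]

lemma gi_symm {n : ℕ} {φ : (Fin n → ℝ) → ℝ} {x : Fin n → ℝ} (hx : (gmet φ x).PosDef)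
    (i j : Fin n) : gi φ x i j = gi φ x j i := by
  have h := hx.isHermitian.inv.apply i j
  simpa [gi] using h.symm

/-- The condition `∇α = 0` expresses `∂_k α` as the row vector `(1/2) α g⁻¹ ∂_k g`. -/
lemma bet_eq {n : ℕ} {φ : (Fin n → ℝ) → ℝ} (hφ : ContDiff ℝ (⊤ : ℕ∞) φ)
    {x : Fin n → ℝ} (hca : ∀ i j, covAlpha φ i j x = 0) (k : Fin n) :
    (fun i => bet φ k i x) =
      (1 / 2 : ℝ) • Matrix.vecMul (fun i => alph φ i x) (gi φ x * dgmet φ k x) := by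
  funext i
  rw [sub_eq_zero.mp (hca k i)]
  simp only [Pi.smul_apply, smul_eq_mul, Matrix.vecMul, dotProduct, Matrix.mul_apply, Chr,
    Finset.mul_sum, Finset.sum_mul]
  refine Finset.sum_congr rfl fun r _ => Finset.sum_congr rfl fun p _ => ?_
  rw [gam_swap_left hφ p k i]
  -- the metric entry `g_{pi}` is by definition `∂_p ∂_i φ`, so its derivative is `2 γ_{kpi}`
  change gi φ x r p * (1 / 2 * pd k (pd p (pd i φ)) x) * _ =
    1 / 2 * (_ * (gi φ x r p * pd k (pd p (pd i φ)) x))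
  ring

lemma differentiableAt_normAlphaSq {n : ℕ} {φ : (Fin n → ℝ) → ℝ}
    (hφ : ContDiff ℝ (⊤ : ℕ∞) φ) {x : Fin n → ℝ} (hx : (gmet φ x).PosDef) :
    DifferentiableAt ℝ (normAlphaSq φ) x := by
  unfold normAlphaSq
  exact DifferentiableAt.fun_sum fun i _ => DifferentiableAt.fun_sum fun j _ =>
    ((differentiableAt_gi hφ hx i j).mul (differentiableAt_alph hφ hx i)).mul
      (differentiableAt_alph hφ hx j)

lemma pd_normAlphaSq {n : ℕ} {φ : (Fin n → ℝ) → ℝ} (hφ : ContDiff ℝ (⊤ : ℕ∞) φ)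
    {Ω : Set (Fin n → ℝ)} (hΩ : IsOpen Ω) (hpos : ∀ x ∈ Ω, (gmet φ x).PosDef)
    {x : Fin n → ℝ} (hx : x ∈ Ω) (hca : ∀ i j, covAlpha φ i j x = 0) (k : Fin n) :
    pd k (normAlphaSq φ) x = 0 := by
  have hP := hpos x hx
  have dgi' := differentiableAt_gi hφ hP
  have dal := differentiableAt_alph hφ hP
  set a : Fin n → ℝ := fun i => alph φ i x with ha
  set b : Fin n → ℝ := fun i => bet φ k i x with hb
  have hexpand : pd k (normAlphaSq φ) x =
      a ⬝ᵥ (dgi φ k x).mulVec a + b ⬝ᵥ (gi φ x).mulVec a + a ⬝ᵥ (gi φ x).mulVec b := by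
    unfold normAlphaSq
    rw [pd_sum k fun i => DifferentiableAt.fun_sum fun j _ =>
      ((dgi' i j).fun_mul (dal i)).fun_mul (dal j)]
    simp only [dotProduct, Matrix.mulVec, Finset.mul_sum, ← Finset.sum_add_distrib]
    refine Finset.sum_congr rfl fun i _ => ?_
    rw [pd_sum k fun j => ((dgi' i j).fun_mul (dal i)).fun_mul (dal j)]
    refine Finset.sum_congr rfl fun j _ => ?_
    rw [pd_mul k ((dgi' i j).fun_mul (dal i)) (dal j), pd_mul k (dgi' i j) (dal i)]
    simp only [ha, hb, dgi, bet]
    ring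
  have hsymm : a ⬝ᵥ (gi φ x).mulVec b = b ⬝ᵥ (gi φ x).mulVec a := by
    simp only [dotProduct, Matrix.mulVec, Finset.mul_sum]
    rw [Finset.sum_comm]
    refine Finset.sum_congr rfl fun i _ => Finset.sum_congr rfl fun j _ => ?_
    rw [gi_symm hP j i]
    ring
  have hba : b ⬝ᵥ (gi φ x).mulVec a =
      (1 / 2) * (a ⬝ᵥ (gi φ x * dgmet φ k x * gi φ x).mulVec a) := by
    rw [hb, bet_eq hφ hca k, smul_dotProduct, ← Matrix.dotProduct_mulVec, Matrix.mulVec_mulVec,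
      smul_eq_mul]
  rw [hexpand, hsymm, hba, pd_gi hφ hΩ hpos hx k, Matrix.neg_mulVec, dotProduct_neg]
  ring

lemma fderiv_eq_zero_of_pd {n : ℕ} {f : (Fin n → ℝ) → ℝ} {x : Fin n → ℝ}
    (h : ∀ k, pd k f x = 0) : fderiv ℝ f x = 0 := by
  ext v
  have hv : v = ∑ k, v k • (Pi.single k 1 : Fin n → ℝ) := by
    simpa using (pi_eq_sum_univ' v)
  rw [hv, map_sum]
  simp only [map_smul]
  exact Finset.sum_eq_zero fun k _ => by
    have := h k
    unfold pd at this
    simp [this]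

/-! ### Traces -/

lemma sum_comm_pairs {n : ℕ} (F : Fin n → Fin n → Fin n → Fin n → ℝ) :
    ∑ i, ∑ j, ∑ r, ∑ p, F i j r p = ∑ r, ∑ p, ∑ i, ∑ j, F i j r p := by
  have h := Finset.sum_comm (s := Finset.univ) (t := Finset.univ)
    (f := fun (q s : Fin n × Fin n) => F q.1 q.2 s.1 s.2)
  simpa only [Fintype.sum_prod_type] using h

/-- If `∇α = 0`, the trace of `β` is `|α|²`, because `Σ g^{ij} γ_{pij} = α_p`. -/
lemma trace_bet {n : ℕ} {φ : (Fin n → ℝ) → ℝ} (hφ : ContDiff ℝ (⊤ : ℕ∞) φ)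
    {x : Fin n → ℝ} (hca : ∀ i j, covAlpha φ i j x = 0) :
    (∑ i, ∑ j, gi φ x i j * bet φ i j x) = normAlphaSq φ x := by
  have htr (p : Fin n) : ∑ i, ∑ j, gi φ x i j * gam φ p i j x = alph φ p x := by
    unfold alph
    refine Finset.sum_congr rfl fun i _ => Finset.sum_congr rfl fun j _ => ?_
    -- total symmetry: `γ_{pij} = γ_{ipj} = γ_{ijp} = γ_{jip}`
    rw [gam_swap_left hφ p i j, gam_swap_right hφ i p j, gam_swap_left hφ i j p]
  have hb (i j : Fin n) : bet φ i j x = ∑ r, ∑ p, gi φ x r p * gam φ p i j x * alph φ r x := by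
    rw [sub_eq_zero.mp (hca i j)]
    simp only [Chr, Finset.sum_mul]
  calc (∑ i, ∑ j, gi φ x i j * bet φ i j x)
      = ∑ i, ∑ j, ∑ r, ∑ p, gi φ x r p * alph φ r x * (gi φ x i j * gam φ p i j x) := by
        simp only [hb, Finset.mul_sum]
        refine Finset.sum_congr rfl fun i _ => Finset.sum_congr rfl fun j _ =>
          Finset.sum_congr rfl fun r _ => Finset.sum_congr rfl fun p _ => ?_
        ring
    _ = ∑ r, ∑ p, ∑ i, ∑ j, gi φ x r p * alph φ r x * (gi φ x i j * gam φ p i j x) := by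
        exact sum_comm_pairs fun i j r p =>
          gi φ x r p * alph φ r x * (gi φ x i j * gam φ p i j x)
    _ = normAlphaSq φ x := by
        simp only [← Finset.mul_sum, htr]
        rfl

/-- The trace of the soliton equation: contraction with the symmetric `g⁻¹` does not distinguish
`T` (in the application `∇_i X_j`) from its transpose, and `g` has trace `n`. -/
lemma trace_of_soliton {n : ℕ} {φ : (Fin n → ℝ) → ℝ} {x : Fin n → ℝ}
    (hx : (gmet φ x).PosDef) {T B : Fin n → Fin n → ℝ} {lam : ℝ}
    (h : ∀ i j, B i j - (1 / 2) * (T i j + T j i) = lam * gmet φ x i j) :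
    (∑ i, ∑ j, gi φ x i j * T i j) = (∑ i, ∑ j, gi φ x i j * B i j) - lam * n := by
  have hswap : (∑ i, ∑ j, gi φ x i j * T j i) = ∑ i, ∑ j, gi φ x i j * T i j := by
    rw [Finset.sum_comm]
    refine Finset.sum_congr rfl fun i _ => Finset.sum_congr rfl fun j _ => ?_
    rw [gi_symm hx j i]
  have hdim : (∑ i, ∑ j, gi φ x i j * gmet φ x i j) = n := by
    have hinv : gi φ x * gmet φ x = 1 := Matrix.nonsing_inv_mul _ hx.det_pos.ne'.isUnit
    have htr := congrArg Matrix.trace hinv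
    rw [Matrix.trace_one, Fintype.card_fin] at htr
    rw [← htr]
    simp only [Matrix.trace, Matrix.diag, Matrix.mul_apply]
    refine Finset.sum_congr rfl fun i _ => Finset.sum_congr rfl fun j _ => ?_
    have hs := hx.isHermitian.apply i j
    rw [star_trivial] at hs
    rw [hs]
  have hsum : (∑ i, ∑ j, gi φ x i j * B i j)
      - (1 / 2) * ((∑ i, ∑ j, gi φ x i j * T i j) + ∑ i, ∑ j, gi φ x i j * T j i)
      = lam * ∑ i, ∑ j, gi φ x i j * gmet φ x i j := by
    simp only [← Finset.sum_add_distrib, Finset.mul_sum, ← Finset.sum_sub_distrib]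
    refine Finset.sum_congr rfl fun i _ => Finset.sum_congr rfl fun j _ => ?_
    linear_combination gi φ x i j * h i j
  rw [hswap, hdim] at hsum
  linarith

theorem divX_constant_of_beta_eq_betaDual {n : ℕ} (hn : 1 ≤ n) (φ : (Fin n → ℝ) → ℝ)
    (hφ : ContDiff ℝ (⊤ : ℕ∞) φ) (Ω : Set (Fin n → ℝ)) (hΩ : IsOpen Ω)
    (hconn : IsConnected Ω) (hpos : ∀ x ∈ Ω, (gmet φ x).PosDef)
    (hca : ∀ x ∈ Ω, ∀ i j, covAlpha φ i j x = 0) :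
    (∀ x ∈ Ω,
      (∑ i, ∑ j, gi φ x i j * bet φ i j x)
        = ∑ i, ∑ j, gi φ x i j * alph φ i x * alph φ j x) ∧
    (∃ C : ℝ, ∀ x ∈ Ω, (∑ i, ∑ j, gi φ x i j * bet φ i j x) = C) ∧
    (∀ (X : Fin n → (Fin n → ℝ) → ℝ), (∀ k, ContDiff ℝ (⊤ : ℕ∞) (X k)) →
      ∀ lam : ℝ,
      (∀ x ∈ Ω, ∀ i j,
        bet φ i j x -
          (1 / 2) * (covCo φ (lowered φ X) i j x + covCo φ (lowered φ X) j i x)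
          = lam * gmet φ x i j) →
      ∃ C : ℝ, ∀ x ∈ Ω,
        (∑ i, ∑ j, gi φ x i j * covCo φ (lowered φ X) i j x) = C) := by
  have htrace : ∀ x ∈ Ω, (∑ i, ∑ j, gi φ x i j * bet φ i j x) = normAlphaSq φ x :=
    fun x hx => trace_bet hφ (hca x hx)
  obtain ⟨C, hC⟩ : ∃ C : ℝ, ∀ x ∈ Ω, normAlphaSq φ x = C :=
    hΩ.exists_is_const_of_fderiv_eq_zero hconn.isPreconnected
      (fun x hx => (differentiableAt_normAlphaSq hφ (hpos x hx)).differentiableWithinAt)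
      fun x hx => fderiv_eq_zero_of_pd (pd_normAlphaSq hφ hΩ hpos hx (hca x hx))
  refine ⟨htrace, ⟨C, fun x hx => (htrace x hx).trans (hC x hx)⟩, ?_⟩
  intro X _ lam hsol
  refine ⟨C - lam * n, fun x hx => ?_⟩
  rw [trace_of_soliton (hpos x hx) (hsol x hx), htrace x hx, hC x hx]

end
end

section
/- The cone example is a proper Hesse–Einstein manifold with β = β': on Ω with φ(x) = −log(x_n² − Σ_{i=1}^{n−1} x_i²), the second Koszul form satisfies β_{ij} = (1/2)∂_i∂_j log det g = (n/2) g_{ij} at every point of Ω (Hesse–Einstein with constant n/2); moreover ∇_iα_j = ∂_iα_j − Σ_r Γ^r_{ij}α_r = 0 at every point of Ω (so the dual second Koszul form β' = β − 2∇α also equals (n/2)g); and the third partial derivatives of φ do not vanish identically on Ω (γ ≠ 0, so the structure is proper: the flat connection D differs from the Levi-Civita connection ∇). -/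
/-!
Here `n = m + 1`. Write `φ = -log q` with `q(x) = Σ ε_i x_i²` the Lorentz form, `y_i = ε_i x_i` and `η = diag(ε)`.
Differentiating on `{q > 0}` gives `∂_iφ = -2 y_i / q` and
`g = -(2/q) η + (4/q²) y yᵀ`, hence `g⁻¹ = -(q/2) η + x xᵀ` because `η y = x` and `y · x = q`.

Contracting `γ` with this inverse yields `α = (n/2) dφ` (`alph_conePhi`; this is the identity
`det g = const · q^{-n}` in differentiated form), and a further derivative gives `β = (n/2) g`.
For `∇α = 0`: raising the index of `dφ` gives the field `-x` (`sum_gi_mul_pd`), and `∂_i∂_jφ` is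
homogeneous of degree `-2`, so `Σ x_p γ_{pij} = -g_{ij}` (`sum_coord_mul_gam`); thus
`Γ^r_{ij} α_r = (n/2) g_{ij} = β_{ij}`. Finally the third derivative of `φ` in the last
direction at the point `(0, …, 0, 1)` of the cone is `-4`.
-/

noncomputable section

variable {n : ℕ}

/-- The open cone `Ω = {x ∈ ℝ^n : x_n > sqrt(Σ_{i=1}^{n-1} x_i²)}` (here `n = m + 1`). -/
def coneSet (m : ℕ) : Set (Fin (m + 1) → ℝ) :=
  {x | Real.sqrt (∑ i : Fin m, x i.castSucc ^ 2) < x (Fin.last m)}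

/-- The potential `φ(x) = −log(x_n² − Σ_{i=1}^{n-1} x_i²)` on the cone (here `n = m + 1`). -/
def conePhi (m : ℕ) : (Fin (m + 1) → ℝ) → ℝ :=
  fun x => - Real.log (x (Fin.last m) ^ 2 - ∑ i : Fin m, x i.castSucc ^ 2)

/-- The diagonal entries `ε_i` of the Lorentz form: `+1` in the last coordinate, `-1` in the
others. -/
def sgn (m : ℕ) (i : Fin (m + 1)) : ℝ := if i = Fin.last m then 1 else -1

/-- The Lorentz quadratic form `q(x) = Σ ε_i x_i²`, so that `φ = -log q`. -/
def lor (m : ℕ) (x : Fin (m + 1) → ℝ) : ℝ := ∑ i, sgn m i * x i ^ 2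

/-- The Lorentz matrix `η = diag(ε)`. -/
def eta (m : ℕ) (i j : Fin (m + 1)) : ℝ := if i = j then sgn m i else 0

lemma sgn_mul_self (m : ℕ) (i : Fin (m + 1)) : sgn m i * sgn m i = 1 := by
  unfold sgn; split_ifs <;> norm_num

lemma lor_eq (m : ℕ) (x : Fin (m + 1) → ℝ) :
    lor m x = x (Fin.last m) ^ 2 - ∑ i : Fin m, x i.castSucc ^ 2 := by
  have h : ∀ i : Fin m, i.castSucc ≠ Fin.last m := fun i => (Fin.castSucc_lt_last i).ne
  simp [lor, sgn, Fin.sum_univ_castSucc, h]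
  ring

lemma conePhi_eq (m : ℕ) : conePhi m = fun x => - Real.log (lor m x) := by
  funext x; simp only [conePhi, lor_eq]

lemma lor_pos {m : ℕ} {x : Fin (m + 1) → ℝ} (hx : x ∈ coneSet m) : 0 < lor m x := by
  have hx' : Real.sqrt (∑ i : Fin m, x i.castSucc ^ 2) < x (Fin.last m) := hx
  rw [lor_eq, sub_pos]
  exact (Real.sqrt_lt' ((Real.sqrt_nonneg _).trans_lt hx')).1 hx'

lemma continuous_lor (m : ℕ) : Continuous (lor m) := by
  unfold lor; fun_prop

lemma eventually_lor_pos {m : ℕ} {x : Fin (m + 1) → ℝ} (hx : 0 < lor m x) :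
    ∀ᶠ y in nhds x, 0 < lor m y :=
  (continuous_lor m).continuousAt.eventually (lt_mem_nhds hx)

lemma pd_congr {n : ℕ} {f g : (Fin n → ℝ) → ℝ} {x : Fin n → ℝ} (i : Fin n)
    (h : ∀ᶠ y in nhds x, f y = g y) : pd i f x = pd i g x := by
  unfold pd; rw [Filter.EventuallyEq.fderiv_eq h]

lemma pd_of_hasFDerivAt {n : ℕ} {f : (Fin n → ℝ) → ℝ} {f' : (Fin n → ℝ) →L[ℝ] ℝ}
    {x : Fin n → ℝ} (i : Fin n) (h : HasFDerivAt f f' x) : pd i f x = f' (Pi.single i 1) := by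
  unfold pd; rw [h.fderiv]

/-- The differential `dq = Σ 2 ε_i x_i dx_i`. -/
def dlor (m : ℕ) (x : Fin (m + 1) → ℝ) : (Fin (m + 1) → ℝ) →L[ℝ] ℝ :=
  ∑ i, (2 * sgn m i * x i) • ContinuousLinearMap.proj (R := ℝ) (φ := fun _ => ℝ) i

lemma dlor_single (m : ℕ) (x : Fin (m + 1) → ℝ) (i : Fin (m + 1)) :
    dlor m x (Pi.single i 1) = 2 * sgn m i * x i := by
  simp [dlor, Pi.single_apply]

lemma hasFDerivAt_coord {n : ℕ} (i : Fin n) (x : Fin n → ℝ) :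
    HasFDerivAt (fun y : Fin n → ℝ => y i)
      (ContinuousLinearMap.proj (R := ℝ) (φ := fun _ => ℝ) i) x :=
  (ContinuousLinearMap.proj (R := ℝ) (φ := fun _ : Fin n => ℝ) i).hasFDerivAt

lemma hasFDerivAt_lor (m : ℕ) (x : Fin (m + 1) → ℝ) : HasFDerivAt (lor m) (dlor m x) x := by
  unfold lor dlor
  refine HasFDerivAt.fun_sum fun i _ => ?_
  refine (((hasFDerivAt_coord i x).pow 2).const_mul (sgn m i)).congr_fderiv ?_
  ext v
  simp
  ring

lemma hasFDerivAt_lor_inv {m : ℕ} {x : Fin (m + 1) → ℝ} (hx : 0 < lor m x) :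
    HasFDerivAt (fun y => (lor m y)⁻¹) ((-((lor m x) ^ 2)⁻¹) • dlor m x) x :=
  (hasDerivAt_inv hx.ne').comp_hasFDerivAt x (hasFDerivAt_lor m x)

/-- `∂_jφ = -2 ε_j x_j / q`. -/
lemma pd_conePhi {m : ℕ} {x : Fin (m + 1) → ℝ} (hx : 0 < lor m x) (j : Fin (m + 1)) :
    pd j (conePhi m) x = -2 * (sgn m j * x j) * (lor m x)⁻¹ := by
  rw [conePhi_eq, pd_of_hasFDerivAt j ((hasFDerivAt_lor m x).log hx.ne').fun_neg]
  simp [dlor_single]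
  ring

/-- `g_{ij} = -2 η_{ij} / q + 4 ε_i x_i ε_j x_j / q²`. -/
lemma gmet_conePhi {m : ℕ} {x : Fin (m + 1) → ℝ} (hx : 0 < lor m x) (i j : Fin (m + 1)) :
    gmet (conePhi m) x i j = -2 * eta m i j * (lor m x)⁻¹
      + 4 * (sgn m i * x i) * (sgn m j * x j) * (lor m x)⁻¹ ^ 2 := by
  unfold gmet
  rw [pd_congr i ((eventually_lor_pos hx).mono fun y hy => pd_conePhi hy j),
    pd_of_hasFDerivAt i ((((hasFDerivAt_coord j x).const_mul (sgn m j)).const_mul (-2)).fun_mul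
      (hasFDerivAt_lor_inv hx))]
  by_cases h : i = j
  · subst h
    simp [dlor_single, eta]
    ring
  · simp [dlor_single, eta, h, Ne.symm h]
    ring

/-- `∂_i∂_j∂_kφ = 4 (y_i η_{jk} + y_j η_{ik} + y_k η_{ij}) / q² - 16 y_i y_j y_k / q³`, where
`y_i = ε_i x_i`. -/
lemma pd3_conePhi {m : ℕ} {x : Fin (m + 1) → ℝ} (hx : 0 < lor m x) (i j k : Fin (m + 1)) :
    pd i (pd j (pd k (conePhi m))) x =
      4 * ((sgn m i * x i) * eta m j k + (sgn m j * x j) * eta m i k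
        + (sgn m k * x k) * eta m i j) * (lor m x)⁻¹ ^ 2
      - 16 * (sgn m i * x i) * (sgn m j * x j) * (sgn m k * x k) * (lor m x)⁻¹ ^ 3 := by
  change pd i (fun y => gmet (conePhi m) y j k) x = _
  rw [pd_congr i ((eventually_lor_pos hx).mono fun y hy => gmet_conePhi hy j k),
    pd_of_hasFDerivAt i (((hasFDerivAt_lor_inv hx).const_mul (-2 * eta m j k)).fun_add
      (((((hasFDerivAt_coord j x).const_mul (sgn m j)).const_mul 4).fun_mul
        ((hasFDerivAt_coord k x).const_mul (sgn m k))).fun_mul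
        ((hasFDerivAt_lor_inv hx).pow 2)))]
  have e : ∀ a b : Fin (m + 1), (Pi.single a (1 : ℝ) : Fin (m + 1) → ℝ) b * sgn m b
      = eta m a b := by
    intro a b
    by_cases h : a = b
    · subst h; simp [eta]
    · simp [eta, h, Ne.symm h]
  rw [← e i j, ← e i k]
  simp [dlor_single]
  ring

/-- The inverse metric is `g^{ij} = -(q/2) η_{ij} + x_i x_j`. -/
lemma gi_conePhi {m : ℕ} {x : Fin (m + 1) → ℝ} (hx : 0 < lor m x) (i j : Fin (m + 1)) :
    gi (conePhi m) x i j = -(lor m x / 2) * eta m i j + x i * x j := by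
  have key : gi (conePhi m) x
      = Matrix.of fun i j => -(lor m x / 2) * eta m i j + x i * x j := by
    unfold gi
    apply Matrix.inv_eq_right_inv
    ext i k
    have hq := hx.ne'
    have hs : ∑ j, (sgn m j * x j) * x j = lor m x :=
      Finset.sum_congr rfl fun j _ => by ring
    have h1 : ∑ j, eta m i j * eta m j k = if i = k then 1 else 0 := by
      by_cases h : i = k
      · subst h; simp [eta, sgn_mul_self]
      · simp [eta, h]
    have h2 : ∑ j, eta m i j * x j = sgn m i * x i := by simp [eta]
    have h3 : ∑ j, (sgn m j * x j) * eta m j k = x k := by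
      simp only [eta, mul_ite, mul_zero, Finset.sum_ite_eq', Finset.mem_univ, if_true]
      linear_combination x k * sgn_mul_self m k
    rw [Matrix.mul_apply, Matrix.one_apply, ← h1]
    simp only [Matrix.of_apply]
    have : ∀ j, gmet (conePhi m) x i j * (-(lor m x / 2) * eta m j k + x j * x k)
        = eta m i j * eta m j k - 2 * (lor m x)⁻¹ * x k * (eta m i j * x j)
          - 2 * (lor m x)⁻¹ * (sgn m i * x i) * ((sgn m j * x j) * eta m j k)
          + 4 * (lor m x)⁻¹ ^ 2 * (sgn m i * x i) * x k * ((sgn m j * x j) * x j) := by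
      intro j
      rw [gmet_conePhi hx]
      field_simp
      ring
    simp only [this, Finset.sum_add_distrib, Finset.sum_sub_distrib, ← Finset.mul_sum, hs, h2, h3]
    field_simp
    ring
  rw [key, Matrix.of_apply]

/-- Euler's relation: `∂_j∂_kφ` is homogeneous of degree `-2`. -/
lemma sum_coord_mul_gam {m : ℕ} {x : Fin (m + 1) → ℝ} (hx : 0 < lor m x) (j k : Fin (m + 1)) :
    ∑ p, x p * gam (conePhi m) p j k x = - gmet (conePhi m) x j k := by
  have hq := hx.ne'
  have hs : ∑ p, sgn m p * x p ^ 2 = lor m x := rfl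
  have h2 : ∀ l, ∑ p, x p * eta m p l = sgn m l * x l := by
    intro l; simp [eta, mul_comm]
  have : ∀ p, x p * gam (conePhi m) p j k x
      = (2 * eta m j k * (lor m x)⁻¹ ^ 2
          - 8 * (sgn m j * x j) * (sgn m k * x k) * (lor m x)⁻¹ ^ 3) * (sgn m p * x p ^ 2)
        + 2 * (sgn m j * x j) * (lor m x)⁻¹ ^ 2 * (x p * eta m p k)
        + 2 * (sgn m k * x k) * (lor m x)⁻¹ ^ 2 * (x p * eta m p j) := by
    intro p
    unfold gam
    rw [pd3_conePhi hx]
    ring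
  simp only [this, Finset.sum_add_distrib, ← Finset.mul_sum, hs, h2]
  rw [gmet_conePhi hx]
  field_simp
  ring

/-- Euler's relation: `∂_jφ` is homogeneous of degree `-1`. -/
lemma sum_coord_mul_gmet {m : ℕ} {x : Fin (m + 1) → ℝ} (hx : 0 < lor m x) (j : Fin (m + 1)) :
    ∑ p, x p * gmet (conePhi m) x p j = - pd j (conePhi m) x := by
  have hq := hx.ne'
  have hs : ∑ p, sgn m p * x p ^ 2 = lor m x := rfl
  have h2 : ∀ l, ∑ p, x p * eta m p l = sgn m l * x l := by
    intro l; simp [eta, mul_comm]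
  have : ∀ p, x p * gmet (conePhi m) x p j
      = -2 * (lor m x)⁻¹ * (x p * eta m p j)
        + 4 * (sgn m j * x j) * (lor m x)⁻¹ ^ 2 * (sgn m p * x p ^ 2) := by
    intro p
    rw [gmet_conePhi hx]
    ring
  simp only [this, Finset.sum_add_distrib, ← Finset.mul_sum, hs, h2]
  rw [pd_conePhi hx]
  field_simp
  ring

/-- The Lorentz trace of the difference tensor. -/
lemma sum_sgn_mul_gam {m : ℕ} {x : Fin (m + 1) → ℝ} (hx : 0 < lor m x) (k : Fin (m + 1)) :
    ∑ p, sgn m p * gam (conePhi m) p p k x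
      = (2 * ((m : ℝ) + 1) - 4) * (sgn m k * x k) * (lor m x)⁻¹ ^ 2 := by
  have hq := hx.ne'
  have hs : ∑ p, sgn m p * x p ^ 2 = lor m x := rfl
  have h2 : ∑ p, x p * eta m p k = sgn m k * x k := by simp [eta, mul_comm]
  have : ∀ p, sgn m p * gam (conePhi m) p p k x
      = 2 * (sgn m k * x k) * (lor m x)⁻¹ ^ 2
        + 4 * (lor m x)⁻¹ ^ 2 * (x p * eta m p k)
        - 8 * (sgn m k * x k) * (lor m x)⁻¹ ^ 3 * (sgn m p * x p ^ 2) := by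
    intro p
    have hpp : eta m p p = sgn m p := by simp [eta]
    unfold gam
    rw [pd3_conePhi hx, hpp]
    linear_combination (2 * (sgn m k * x k) * (lor m x)⁻¹ ^ 2
      + 4 * (lor m x)⁻¹ ^ 2 * (x p * eta m p k)
      - 8 * (sgn m k * x k) * (lor m x)⁻¹ ^ 3 * (sgn m p * x p ^ 2)) * sgn_mul_self m p
  simp only [this, Finset.sum_add_distrib, Finset.sum_sub_distrib, ← Finset.mul_sum, hs, h2]
  simp
  field_simp
  ring

/-- The first Koszul form is `α = (n/2) dφ`. -/
lemma alph_conePhi {m : ℕ} {x : Fin (m + 1) → ℝ} (hx : 0 < lor m x) (k : Fin (m + 1)) :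
    alph (conePhi m) k x = (((m : ℝ) + 1) / 2) * pd k (conePhi m) x := by
  have hq := hx.ne'
  have inner : ∀ r, ∑ p, gi (conePhi m) x r p * gam (conePhi m) p r k x
      = -(lor m x / 2) * (sgn m r * gam (conePhi m) r r k x)
        - x r * gmet (conePhi m) x r k := by
    intro r
    have h1 : ∑ p, eta m r p * gam (conePhi m) p r k x
        = sgn m r * gam (conePhi m) r r k x := by simp [eta]
    rw [sub_eq_add_neg, ← mul_neg, ← sum_coord_mul_gam hx, ← h1, Finset.mul_sum, Finset.mul_sum,
      ← Finset.sum_add_distrib]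
    refine Finset.sum_congr rfl fun p _ => ?_
    rw [gi_conePhi hx]
    ring
  unfold alph
  simp only [inner, Finset.sum_sub_distrib, ← Finset.mul_sum]
  rw [sum_sgn_mul_gam hx, sum_coord_mul_gmet hx, pd_conePhi hx]
  field_simp
  ring

/-- Raising the index of `dφ` gives minus the radial field: `g^{rp} ∂_rφ = -x_p`. -/
lemma sum_gi_mul_pd {m : ℕ} {x : Fin (m + 1) → ℝ} (hx : 0 < lor m x) (p : Fin (m + 1)) :
    ∑ r, gi (conePhi m) x r p * pd r (conePhi m) x = - x p := by
  have hq := hx.ne'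
  have hs : ∑ r, sgn m r * x r ^ 2 = lor m x := rfl
  have h3 : ∑ j, (sgn m j * x j) * eta m j p = x p := by
    simp only [eta, mul_ite, mul_zero, Finset.sum_ite_eq', Finset.mem_univ, if_true]
    linear_combination x p * sgn_mul_self m p
  have : ∀ r, gi (conePhi m) x r p * pd r (conePhi m) x
      = (sgn m r * x r) * eta m r p - 2 * x p * (lor m x)⁻¹ * (sgn m r * x r ^ 2) := by
    intro r
    rw [gi_conePhi hx, pd_conePhi hx]
    field_simp
    ring
  simp only [this, Finset.sum_sub_distrib, ← Finset.mul_sum, hs, h3]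
  field_simp
  ring

/-- The Hesse-Einstein identity, obtained by differentiating `α = (n/2) dφ`. -/
lemma bet_conePhi {m : ℕ} {x : Fin (m + 1) → ℝ} (hx : 0 < lor m x) (i j : Fin (m + 1)) :
    bet (conePhi m) i j x = (((m : ℝ) + 1) / 2) * gmet (conePhi m) x i j := by
  unfold bet
  rw [pd_congr i ((eventually_lor_pos hx).mono fun y hy =>
    (alph_conePhi hy j).trans (by rw [pd_conePhi hy j]))]
  have hd := (((hasFDerivAt_coord j x).const_mul (sgn m j)).const_mul (-2)).fun_mul
      (hasFDerivAt_lor_inv hx)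
  rw [pd_of_hasFDerivAt i (hd.const_mul (((m : ℝ) + 1) / 2))]
  rw [show gmet (conePhi m) x i j = pd i (pd j (conePhi m)) x from rfl,
    pd_congr i ((eventually_lor_pos hx).mono fun y hy => pd_conePhi hy j),
    pd_of_hasFDerivAt i hd]
  simp
  ring

/-- The first Koszul form is parallel. -/
lemma covAlpha_conePhi {m : ℕ} {x : Fin (m + 1) → ℝ} (hx : 0 < lor m x) (i j : Fin (m + 1)) :
    covAlpha (conePhi m) i j x = 0 := by
  have h : ∑ r, Chr (conePhi m) r i j x * alph (conePhi m) r x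
      = (((m : ℝ) + 1) / 2) * gmet (conePhi m) x i j := by
    calc ∑ r, Chr (conePhi m) r i j x * alph (conePhi m) r x
        = ∑ r, ∑ p, (((m : ℝ) + 1) / 2) * gam (conePhi m) p i j x *
            (gi (conePhi m) x r p * pd r (conePhi m) x) := by
          refine Finset.sum_congr rfl fun r _ => ?_
          rw [alph_conePhi hx, Chr, Finset.sum_mul]
          exact Finset.sum_congr rfl fun p _ => by ring
      _ = ∑ p, (((m : ℝ) + 1) / 2) * gam (conePhi m) p i j x * (- x p) := by
          rw [Finset.sum_comm]
          simp only [← Finset.mul_sum, sum_gi_mul_pd hx]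
      _ = -(((m : ℝ) + 1) / 2) * ∑ p, x p * gam (conePhi m) p i j x := by
          rw [Finset.mul_sum]
          exact Finset.sum_congr rfl fun p _ => by ring
      _ = _ := by rw [sum_coord_mul_gam hx]; ring
  unfold covAlpha
  rw [h, bet_conePhi hx, sub_self]

theorem cone_proper_hesse_einstein (m : ℕ) :
    (∀ x ∈ coneSet m, ∀ i j,
      bet (conePhi m) i j x = (((m : ℝ) + 1) / 2) * gmet (conePhi m) x i j) ∧
    (∀ x ∈ coneSet m, ∀ i j, covAlpha (conePhi m) i j x = 0) ∧
    (∀ x ∈ coneSet m, ∀ i j,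
      bet (conePhi m) i j x - 2 * covAlpha (conePhi m) i j x
        = (((m : ℝ) + 1) / 2) * gmet (conePhi m) x i j) ∧
    ¬ (∀ x ∈ coneSet m, ∀ i j k, pd i (pd j (pd k (conePhi m))) x = 0) := by
  refine ⟨fun x hx i j => bet_conePhi (lor_pos hx) i j,
    fun x hx i j => covAlpha_conePhi (lor_pos hx) i j, fun x hx i j => ?_, fun h => ?_⟩
  · rw [covAlpha_conePhi (lor_pos hx), bet_conePhi (lor_pos hx), mul_zero, sub_zero]
  · have hx : (Pi.single (Fin.last m) 1 : Fin (m + 1) → ℝ) ∈ coneSet m := by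
      have hne : ∀ i : Fin m, i.castSucc ≠ Fin.last m := fun i => (Fin.castSucc_lt_last i).ne
      simp [coneSet, hne]
    have h3 := h _ hx (Fin.last m) (Fin.last m) (Fin.last m)
    rw [pd3_conePhi (lor_pos hx)] at h3
    have hl : lor m (Pi.single (Fin.last m) 1) = 1 := by
      simp [lor, Pi.single_apply, sgn]
    rw [hl] at h3
    simp [eta, sgn] at h3
    norm_num at h3

end
end
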